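/- Let μ be a measure on ℝ with all moments finite and infinite support. Assume: (1) μ is determinate, (2) supp(μ) ⊆ [0,∞), (3) 0 ∈ supp(μ), (4) μ({0}) = 0. Then for every k ∈ ℕ₀ the polynomials are dense in L²(x^k·μ), where x^k·μ denotes the measure with density x ↦ x^k with respect to μ (i.e., the density index δ(μ) of μ is infinite). -/

import Mathlib

open MeasureTheory Polynomial Filter

noncomputable section

/-- A measure on `ℝ` has all moments finite. -/
def HasAllMoments (μ : Measure ℝ) : Prop :=
  ∀ n : ℕ, Integrable (fun x : ℝ => |x| ^ n) μ

/-- The (topological) support of a measure on `ℝ`: points all of whose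
neighborhoods have positive measure. -/
def mSupp (μ : Measure ℝ) : Set ℝ :=
  {x : ℝ | ∀ U ∈ nhds x, μ U ≠ 0}

/-- A measure with all moments finite is determinate if it is the unique measure
with all moments finite having its moment sequence. -/
def IsDeterminate (μ : Measure ℝ) : Prop :=
  ∀ ν : Measure ℝ, HasAllMoments ν →
    (∀ n : ℕ, ∫ x, x ^ n ∂ν = ∫ x, x ^ n ∂μ) → ν = μ

/-- The complex polynomial functions are dense in `L²(ν)`. -/
def PolyDense (ν : Measure ℝ) : Prop :=
  Dense {f : Lp ℂ 2 ν | ∃ p : Polynomial ℂ, ⇑f =ᵐ[ν] fun x : ℝ => p.eval (x : ℂ)}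


lemma flip_aux (n : ℕ) : ∀ p : ℂ[X], p.natDegree = n → ∃ q : ℂ[X],
    (∀ x : ℝ, ‖q.eval (x:ℂ)‖ = ‖p.eval (x:ℂ)‖) ∧
    ∀ t : ℝ, ‖p.eval (t:ℂ)‖ ≤ ‖q.eval ((t:ℂ) + Complex.I)‖ := by
  induction n with
  | zero =>
    intro p hp
    obtain ⟨a, rfl⟩ := Polynomial.natDegree_eq_zero.mp hp
    exact ⟨C a, by simp, by simp⟩
  | succ n ih =>
    intro p hp
    obtain ⟨a, ha⟩ := IsAlgClosed.exists_root p (by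
      intro h
      have h2 : p.natDegree = 0 := Polynomial.natDegree_eq_of_degree_eq_some h
      omega)
    obtain ⟨r, rfl⟩ := Polynomial.dvd_iff_isRoot.mpr ha
    have hr : r ≠ 0 := by rintro rfl; simp at hp
    rw [Polynomial.natDegree_mul (X_sub_C_ne_zero a) hr, natDegree_X_sub_C] at hp
    obtain ⟨q, hq1, hq2⟩ := ih r (by omega)
    have key : ∃ b : ℂ, (∀ x : ℝ, ‖(x:ℂ) - b‖ = ‖(x:ℂ) - a‖) ∧
        ∀ t : ℝ, ‖(t:ℂ) - a‖ ≤ ‖(t:ℂ) + Complex.I - b‖ := by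
      rcases le_total a.im 0 with h | h
      · refine ⟨a, fun _ => rfl, fun t => ?_⟩
        rw [Complex.norm_def, Complex.norm_def]
        apply Real.sqrt_le_sqrt
        simp [Complex.normSq_apply]
        nlinarith
      · refine ⟨(starRingEnd ℂ) a, fun x => ?_, fun t => ?_⟩
        · rw [← Complex.norm_conj]; simp
        · rw [Complex.norm_def, Complex.norm_def]
          apply Real.sqrt_le_sqrt
          simp [Complex.normSq_apply]
          nlinarith
    obtain ⟨b, hb1, hb2⟩ := key
    refine ⟨(X - C b) * q, fun x => ?_, fun t => ?_⟩
    · simp [hb1, hq1]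
    · simp only [eval_mul, eval_sub, eval_X, eval_C, norm_mul]
      exact mul_le_mul (hb2 t) (hq2 t) (norm_nonneg _) (norm_nonneg _)

lemma nonneg_of_mul_sq (r : ℝ[X]) (a : ℝ) (h : ∀ x : ℝ, x ≠ a → 0 ≤ r.eval x) (x : ℝ) :
    0 ≤ r.eval x := by
  have hd : Dense ({a}ᶜ : Set ℝ) := dense_compl_singleton a
  have hc : IsClosed {x : ℝ | 0 ≤ r.eval x} := isClosed_le continuous_const r.continuous
  have : closure ({a}ᶜ : Set ℝ) ⊆ {x : ℝ | 0 ≤ r.eval x} :=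
    hc.closure_subset_iff.mpr (fun x hx => h x hx)
  exact this (hd x)

lemma sos_aux (n : ℕ) : ∀ p : ℝ[X], p.natDegree ≤ n → (∀ x, 0 ≤ p.eval x) → ∃ s : ℂ[X],
    ∀ x : ℝ, ‖s.eval (x:ℂ)‖ ^ 2 = p.eval x := by
  induction n using Nat.strong_induction_on with
  | _ n ih =>
  intro p hp hpos
  by_cases hd : p.natDegree = 0
  · obtain ⟨a, rfl⟩ := Polynomial.natDegree_eq_zero.mp hd
    have ha : 0 ≤ a := by simpa using hpos 0
    refine ⟨C (Real.sqrt a : ℂ), fun x => ?_⟩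
    simp [Real.sq_sqrt ha]
  have hp0 : p ≠ 0 := by rintro rfl; simp at hd
  obtain ⟨z, hz⟩ := IsAlgClosed.exists_aeval_eq_zero ℂ p (by
      intro h
      exact hd (Polynomial.natDegree_eq_of_degree_eq_some h))
  have key : ∃ r : ℝ[X], r.natDegree < p.natDegree ∧ (∀ x, 0 ≤ r.eval x) ∧
      ∀ x : ℝ, p.eval x = ‖(x:ℂ) - z‖ ^ 2 * r.eval x := by
    have hn : ∀ x : ℝ, ‖(x:ℂ) - z‖ ^ 2 = (x - z.re) ^ 2 + z.im ^ 2 := by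
      intro x
      rw [← Complex.normSq_eq_norm_sq, Complex.normSq_apply]
      simp; ring
    by_cases him : z.im = 0
    · have hz' : z = (z.re : ℂ) := by apply Complex.ext <;> simp [him]
      set a := z.re with ha
      have hroot : p.IsRoot a := by
        rw [hz', ← Complex.coe_algebraMap, Polynomial.aeval_algebraMap_apply] at hz
        simpa using hz
      obtain ⟨q, rfl⟩ := Polynomial.dvd_iff_isRoot.mpr hroot
      have hqa : q.IsRoot a := by
        have hcont : ContinuousAt (fun x => q.eval x) a := q.continuous.continuousAt
        by_contra hne
        rcases lt_or_gt_of_ne (show q.eval a ≠ 0 from hne) with hlt | hgt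
        · have := hcont.eventually (gt_mem_nhds hlt)
          obtain ⟨e, he, hb⟩ := Metric.eventually_nhds_iff.mp this
          have h1 := hb (y := a + e/2) (by simp [abs_of_pos he]; linarith)
          have h2 := hpos (a + e/2)
          simp at h2
          nlinarith
        · have := hcont.eventually (lt_mem_nhds hgt)
          obtain ⟨e, he, hb⟩ := Metric.eventually_nhds_iff.mp this
          have h1 := hb (y := a - e/2) (by simp [abs_of_pos he]; linarith)
          have h2 := hpos (a - e/2)
          simp at h2
          nlinarith
      obtain ⟨r, rfl⟩ := Polynomial.dvd_iff_isRoot.mpr hqa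
      have hr : r ≠ 0 := by rintro rfl; simp at hp0
      refine ⟨r, ?_, ?_, ?_⟩
      · rw [Polynomial.natDegree_mul (X_sub_C_ne_zero a) (mul_ne_zero (X_sub_C_ne_zero a) hr),
          Polynomial.natDegree_mul (X_sub_C_ne_zero a) hr, natDegree_X_sub_C]
        omega
      · apply nonneg_of_mul_sq r a
        intro x hx
        have := hpos x
        simp at this
        have h3 : 0 < (x - a)^2 := by have := sub_ne_zero.mpr hx; positivity
        by_contra hneg
        push Not at hneg
        nlinarith
      · intro x
        rw [hn, him]; simp; ring
    · obtain ⟨r, hr⟩ := Polynomial.quadratic_dvd_of_aeval_eq_zero_im_ne_zero p hz him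
      have hev : ∀ x : ℝ, p.eval x = ‖(x:ℂ) - z‖ ^ 2 * r.eval x := by
        intro x
        have h1 : ‖z‖^2 = z.re^2 + z.im^2 := by
          rw [← Complex.normSq_eq_norm_sq, Complex.normSq_apply]; ring
        rw [hr, hn]
        simp only [eval_mul, eval_add, eval_sub, eval_pow, eval_X, eval_C, h1]
        ring
      refine ⟨r, ?_, ?_, hev⟩
      · have hr0 : r ≠ 0 := by rintro rfl; simp at hr; exact hp0 hr
        have hmon : (X ^ 2 - C (2 * z.re) * X + C (‖z‖ ^ 2) : ℝ[X]).natDegree = 2 := by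
          compute_degree!
        have hq0 : (X ^ 2 - C (2 * z.re) * X + C (‖z‖ ^ 2) : ℝ[X]) ≠ 0 := by
          intro h; rw [h] at hmon; simp at hmon
        have := congrArg natDegree hr
        rw [Polynomial.natDegree_mul hq0 hr0, hmon] at this
        omega
      · intro x
        have h2 := hpos x
        rw [hev, hn] at h2
        have : 0 < (x - z.re)^2 + z.im^2 := by positivity
        exact nonneg_of_mul_nonneg_right h2 this
  obtain ⟨r, h1, h2, h3⟩ := key
  obtain ⟨s, hs⟩ := ih r.natDegree (by omega) r le_rfl h2
  refine ⟨(X - C z) * s, fun x => ?_⟩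
  rw [h3, ← hs]
  simp [mul_pow]

lemma finite_of_moments {ν : Measure ℝ} (h : HasAllMoments ν) : IsFiniteMeasure ν := by
  have := h 0
  simp only [pow_zero] at this
  exact (integrable_const_iff_isFiniteMeasure (one_ne_zero (α := ℝ))).mp this

lemma poly_cont (p : ℂ[X]) : Continuous (fun x : ℝ => p.eval (x:ℂ)) :=
  p.continuous.comp Complex.continuous_ofReal

lemma poly_memLp {ν : Measure ℝ} (h : HasAllMoments ν) (p : ℂ[X]) :
    MemLp (fun x : ℝ => p.eval (x:ℂ)) 2 ν := by
  induction p using Polynomial.induction_on' with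
  | add p q hp hq => simp only [eval_add]; exact hp.add hq
  | monomial n a =>
    rw [memLp_two_iff_integrable_sq_norm (poly_cont _).aestronglyMeasurable]
    have := (h (2 * n)).const_mul (‖a‖ ^ 2)
    refine this.congr (ae_of_all _ fun x => ?_)
    have h1 : (|x| ^ n) ^ 2 = |x| ^ (2 * n) := by rw [← pow_mul, mul_comm]
    simp only [eval_monomial, norm_mul, norm_pow, Complex.norm_real, Real.norm_eq_abs, mul_pow, h1]

def Ann (ν : Measure ℝ) (h : ℝ → ℂ) : Prop :=
  MemLp h 2 ν ∧ ∀ p : ℂ[X], ∫ x : ℝ, p.eval (x:ℂ) * h x ∂ν = 0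

lemma exists_ann {ν : Measure ℝ} (hm : HasAllMoments ν) (hd : ¬ PolyDense ν) :
    ∃ h, Ann ν h ∧ ¬ h =ᵐ[ν] 0 := by
  let K : Submodule ℂ (Lp ℂ 2 ν) :=
    { carrier := {f : Lp ℂ 2 ν | ∃ p : Polynomial ℂ, ⇑f =ᵐ[ν] fun x : ℝ => p.eval (x : ℂ)}
      add_mem' := by
        rintro f g ⟨p, hp⟩ ⟨q, hq⟩
        refine ⟨p + q, ?_⟩
        filter_upwards [hp, hq, Lp.coeFn_add f g] with x h1 h2 h3
        rw [h3, Pi.add_apply, h1, h2, eval_add]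
      zero_mem' := ⟨0, by
        filter_upwards [Lp.coeFn_zero ℂ 2 ν] with x hx
        rw [hx]; simp⟩
      smul_mem' := by
        rintro c f ⟨p, hp⟩
        refine ⟨C c * p, ?_⟩
        filter_upwards [hp, Lp.coeFn_smul c f] with x h1 h2
        simp [h1, h2] }
  have hK : K.topologicalClosure ≠ ⊤ := by
    intro h
    apply hd
    have : Dense (K : Set (Lp ℂ 2 ν)) := Submodule.dense_iff_topologicalClosure_eq_top.mpr h
    exact this
  rw [Ne, Submodule.topologicalClosure_eq_top_iff] at hK
  obtain ⟨g, hgK, hg0⟩ := Submodule.exists_mem_ne_zero_of_ne_bot hK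
  refine ⟨g, ⟨Lp.memLp g, fun p => ?_⟩, ?_⟩
  · let pc : ℂ[X] := p.map (starRingEnd ℂ)
    have hmem := poly_memLp hm pc
    have := (Submodule.mem_orthogonal _ _).mp hgK (hmem.toLp _) ⟨pc, hmem.coeFn_toLp⟩
    rw [L2.inner_def] at this
    rw [← this]
    apply integral_congr_ae
    filter_upwards [hmem.coeFn_toLp] with x hx
    have hc : (starRingEnd ℂ) (pc.eval (x:ℂ)) = p.eval (x:ℂ) := by
      have h1 := Polynomial.eval_map_apply (p := p) (f := starRingEnd ℂ) (x : ℂ)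
      rw [Complex.conj_ofReal] at h1
      simp only [pc]
      rw [h1, Complex.conj_conj]
    rw [hx, RCLike.inner_apply, hc, mul_comm]
  · intro h
    exact hg0 (Lp.eq_zero_iff_ae_eq_zero.mpr h)

lemma eval_conj_poly (p : ℂ[X]) (x : ℝ) :
    (p.map (starRingEnd ℂ)).eval (x:ℂ) = (starRingEnd ℂ) (p.eval (x:ℂ)) := by
  have h1 := Polynomial.eval_map_apply (p := p) (f := starRingEnd ℂ) (x : ℂ)
  rwa [Complex.conj_ofReal] at h1

lemma ann_int {ν : Measure ℝ} (hm : HasAllMoments ν) {h : ℝ → ℂ} (hh : Ann ν h) (p : ℂ[X]) :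
    Integrable (fun x : ℝ => p.eval (x:ℂ) * h x) ν :=
  MemLp.integrable_mul (poly_memLp hm p) hh.1

lemma ann_conj {ν : Measure ℝ} {h : ℝ → ℂ} (hh : Ann ν h) :
    Ann ν (fun x => (starRingEnd ℂ) (h x)) := by
  refine ⟨hh.1.star, fun p => ?_⟩
  have := hh.2 (p.map (starRingEnd ℂ))
  have h2 := congrArg (starRingEnd ℂ) this
  rw [← integral_conj, map_zero] at h2
  rw [← h2]
  congr 1
  ext x
  rw [eval_conj_poly, map_mul, Complex.conj_conj]

lemma ann_add {ν : Measure ℝ} (hm : HasAllMoments ν) {h g : ℝ → ℂ} (hh : Ann ν h) (hg : Ann ν g) :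
    Ann ν (fun x => h x + g x) := by
  refine ⟨hh.1.add hg.1, fun p => ?_⟩
  simp only [mul_add]
  rw [integral_add (ann_int hm hh p) (ann_int hm hg p), hh.2, hg.2, add_zero]

lemma ann_smul {ν : Measure ℝ} {h : ℝ → ℂ} (hh : Ann ν h) (c : ℂ) :
    Ann ν (fun x => c * h x) := by
  refine ⟨hh.1.const_mul c, fun p => ?_⟩
  have : ∀ x : ℝ, p.eval (x:ℂ) * (c * h x) = c * (p.eval (x:ℂ) * h x) := fun x => by ring
  simp only [this]
  rw [integral_const_mul, hh.2, mul_zero]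

lemma norm_sub_ge (x t : ℝ) : 1 ≤ ‖(x:ℂ) - (t + Complex.I)‖ := by
  have := Complex.abs_im_le_norm ((x:ℂ) - (t + Complex.I))
  simpa using this

lemma sub_ne (x t : ℝ) : (x:ℂ) - (t + Complex.I) ≠ 0 := by
  intro h
  have := norm_sub_ge x t
  rw [h] at this
  simp at this
  linarith

lemma norm_inv_le (x t : ℝ) : ‖((x:ℂ) - (t + Complex.I))⁻¹‖ ≤ 1 := by
  rw [norm_inv]
  exact inv_le_one_of_one_le₀ (norm_sub_ge x t)

lemma cont_inv (t : ℝ) : Continuous (fun x : ℝ => ((x:ℂ) - (t + Complex.I))⁻¹) :=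
  (by fun_prop : Continuous (fun x : ℝ => (x:ℂ) - (t + Complex.I))).inv₀ (fun x => sub_ne x t)

lemma ann_memLp_inv {ν : Measure ℝ} {h : ℝ → ℂ} (hh : MemLp h 2 ν) (t : ℝ) :
    MemLp (fun x : ℝ => ((x:ℂ) - (t + Complex.I))⁻¹ * h x) 2 ν := by
  refine MemLp.of_le hh ((cont_inv t).aestronglyMeasurable.mul hh.1) (ae_of_all _ fun x => ?_)
  rw [norm_mul]
  exact mul_le_of_le_one_left (norm_nonneg _) (norm_inv_le x t)

lemma ann_eval {ν : Measure ℝ} (hm : HasAllMoments ν) {h : ℝ → ℂ} (hh : Ann ν h) (t : ℝ)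
    (p : ℂ[X]) :
    ∫ x : ℝ, p.eval (x:ℂ) * (((x:ℂ) - (t + Complex.I))⁻¹ * h x) ∂ν =
      p.eval (t + Complex.I) * ∫ x : ℝ, ((x:ℂ) - (t + Complex.I))⁻¹ * h x ∂ν := by
  have := finite_of_moments hm
  set z : ℂ := t + Complex.I with hz
  obtain ⟨q, hq⟩ := Polynomial.X_sub_C_dvd_sub_C_eval (p := p) (a := z)
  have hi : Integrable (fun x : ℝ => ((x:ℂ) - z)⁻¹ * h x) ν :=
    (ann_memLp_inv hh.1 t).integrable (by norm_num)
  have hpt : ∀ x : ℝ, p.eval (x:ℂ) * (((x:ℂ) - z)⁻¹ * h x) =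
      p.eval z * (((x:ℂ) - z)⁻¹ * h x) + q.eval (x:ℂ) * h x := by
    intro x
    have h1 : p.eval (x:ℂ) = p.eval z + ((x:ℂ) - z) * q.eval (x:ℂ) := by
      have := congrArg (fun r => Polynomial.eval (x:ℂ) r) hq
      simp at this
      linear_combination this
    have h2 : ((x:ℂ) - z) ≠ 0 := sub_ne x t
    rw [h1]
    field_simp
  simp only [hpt]
  rw [integral_add (hi.const_mul _) (ann_int hm hh q), integral_const_mul, hh.2, add_zero]

open BoundedContinuousFunction in
lemma ann_nonzero {ν : Measure ℝ} (hm : HasAllMoments ν) (hd : ¬ PolyDense ν) :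
    ∃ h, Ann ν h ∧ ∫ x : ℝ, ((x:ℂ) - ((0:ℝ) + Complex.I))⁻¹ * h x ∂ν ≠ 0 := by
  have := finite_of_moments hm
  by_contra hcon
  push Not at hcon
  have hu : ∀ h, Ann ν h → Ann ν (fun x : ℝ => ((x:ℂ) - ((0:ℝ) + Complex.I))⁻¹ * h x) := by
    intro h hh
    refine ⟨ann_memLp_inv hh.1 0, fun p => ?_⟩
    rw [ann_eval hm hh, hcon h hh, mul_zero]
  let A : StarSubalgebra ℂ (ℝ →ᵇ ℂ) :=
    { carrier := {F | ∀ h, Ann ν h → Ann ν (fun x => F x * h x)}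
      mul_mem' := by
        intro F G hF hG h hh
        have := hF _ (hG h hh)
        simpa [mul_assoc] using this
      add_mem' := by
        intro F G hF hG h hh
        have := ann_add hm (hF h hh) (hG h hh)
        simpa [add_mul] using this
      algebraMap_mem' := by
        intro c h hh
        exact ann_smul hh c
      star_mem' := by
        intro F hF h hh
        have := ann_conj (hF _ (ann_conj hh))
        simpa using this }
  let U : ℝ →ᵇ ℂ := BoundedContinuousFunction.ofNormedAddCommGroup
    (fun x : ℝ => ((x:ℂ) - ((0:ℝ) + Complex.I))⁻¹) (cont_inv 0) 1 (fun x => norm_inv_le x 0)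
  have hUA : U ∈ A := fun h hh => hu h hh
  have hsep : (A.map (toContinuousMapStarₐ ℂ)).SeparatesPoints := by
    intro x y hxy
    refine ⟨U, ⟨toContinuousMapStarₐ ℂ U, ⟨U, hUA, rfl⟩, rfl⟩, ?_⟩
    intro h
    apply hxy
    have h2 : ((x:ℂ) - ((0:ℝ) + Complex.I))⁻¹ = ((y:ℂ) - ((0:ℝ) + Complex.I))⁻¹ := h
    have h3 := inv_injective h2
    simpa using h3
  -- real annihilators vanish
  have hreal : ∀ h, Ann ν h → (∀ x, (h x).im = 0) → h =ᵐ[ν] 0 := by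
    intro h hh him
    have hint : Integrable h ν := hh.1.integrable (by norm_num)
    have hre : Integrable (fun x => (h x).re) ν := hint.re
    have hrem : AEMeasurable (fun x => (h x).re) ν := hre.aemeasurable
    have hmeas : ∀ e : ℝ, AEMeasurable (fun x => ENNReal.ofReal (e * (h x).re)) ν :=
      fun e => (hrem.const_mul e).ennreal_ofReal
    have hf : ∀ e : ℝ, IsFiniteMeasure (ν.withDensity fun x => ENNReal.ofReal (e * (h x).re)) :=
      fun e => isFiniteMeasure_withDensity_ofReal (hre.const_mul e).2
    have := hf 1
    have := hf (-1)
    have heq : (ν.withDensity fun x => ENNReal.ofReal (1 * (h x).re)) =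
        ν.withDensity fun x => ENNReal.ofReal (-1 * (h x).re) := by
      apply ext_of_forall_mem_subalgebra_integral_eq_of_polish hsep
      intro F hF
      have e1 := hF h hh
      have e2 := e1.2 1
      simp only [eval_one, one_mul] at e2
      have hFi : Integrable (fun x => F x * h x) ν := e1.1.integrable (by norm_num)
      rw [integral_withDensity_eq_integral_toReal_smul₀ (hmeas _)
        (ae_of_all _ fun _ => ENNReal.ofReal_lt_top),
        integral_withDensity_eq_integral_toReal_smul₀ (hmeas _)
        (ae_of_all _ fun _ => ENNReal.ofReal_lt_top)]
      have hii : ∀ e : ℝ, |e| = 1 → Integrable (fun x => (ENNReal.ofReal (e * (h x).re)).toReal • F x) ν := by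
        intro e he
        refine hFi.mono ?_ (ae_of_all _ fun x => ?_)
        · exact (hmeas e).ennreal_toReal.aestronglyMeasurable.smul
            F.continuous.aestronglyMeasurable
        · rw [norm_smul, norm_mul, mul_comm]
          apply mul_le_mul_of_nonneg_left _ (norm_nonneg _)
          rw [ENNReal.toReal_ofReal', Real.norm_eq_abs]
          have h3 := Complex.abs_re_le_norm (h x)
          rw [abs_of_nonneg (le_max_right _ _)]
          apply max_le _ (norm_nonneg _)
          calc e * (h x).re ≤ |e * (h x).re| := le_abs_self _
            _ = |(h x).re| := by rw [abs_mul, he, one_mul]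
            _ ≤ _ := h3
      rw [← sub_eq_zero, ← integral_sub (hii _ (by simp)) (hii _ (by simp)), ← e2]
      congr 1
      ext x
      rw [← sub_smul, ENNReal.toReal_ofReal', ENNReal.toReal_ofReal']
      have : max (1 * (h x).re) 0 - max (-1 * (h x).re) 0 = (h x).re := by
        rcases le_total 0 (h x).re with h5 | h5
        · rw [max_eq_left (by linarith), max_eq_right (by linarith)]; ring
        · rw [max_eq_right (by linarith), max_eq_left (by linarith)]; ring
      rw [this, Complex.real_smul, mul_comm]
      congr 1
      apply Complex.ext <;> simp [him]
    have h6 := (withDensity_eq_iff (hmeas 1) (hmeas (-1)) (by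
      have : ∫⁻ x, ENNReal.ofReal (1 * (h x).re) ∂ν < ⊤ := by
        have := measure_lt_top (ν.withDensity fun x => ENNReal.ofReal (1 * (h x).re)) Set.univ
        simpa using this
      exact this.ne)).mp heq
    filter_upwards [h6] with x hx
    have h7 := congrArg ENNReal.toReal hx
    rw [ENNReal.toReal_ofReal', ENNReal.toReal_ofReal'] at h7
    have h8 : (h x).re = 0 := by
      rcases le_total 0 (h x).re with h5 | h5
      · rw [max_eq_left (by linarith), max_eq_right (by linarith)] at h7; linarith
      · rw [max_eq_right (by linarith), max_eq_left (by linarith)] at h7; linarith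
    apply Complex.ext <;> simp [h8, him]
  obtain ⟨h, hh, hne⟩ := exists_ann hm hd
  apply hne
  have r1 := hreal _ (ann_add hm hh (ann_conj hh)) (by simp)
  have r2 := hreal _ (ann_smul (ann_add hm hh (ann_smul (ann_conj hh) (-1))) Complex.I) (by simp)
  filter_upwards [r1, r2] with x h1 h2
  simp only [Pi.zero_apply] at h1 h2 ⊢
  have h3 := (mul_eq_zero.mp h2).resolve_left Complex.I_ne_zero
  have : 2 * h x = 0 := by linear_combination h1 + h3
  simpa using this

lemma real_bound {ν : Measure ℝ} (hm : HasAllMoments ν) (hd : ¬ PolyDense ν) :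
    ∃ c ρ : ℝ, 0 < c ∧ 0 < ρ ∧ ∀ p : ℂ[X], ∀ t : ℝ, |t| ≤ ρ →
      ‖p.eval (t:ℂ)‖ ^ 2 ≤ c * ∫ x : ℝ, ‖p.eval (x:ℂ)‖ ^ 2 ∂ν := by
  have := finite_of_moments hm
  obtain ⟨h, hh, hne⟩ := ann_nonzero hm hd
  have hint : Integrable h ν := hh.1.integrable (by norm_num)
  let G : ℝ → ℂ := fun t => ∫ x : ℝ, ((x:ℂ) - (t + Complex.I))⁻¹ * h x ∂ν
  have hG : Continuous G := by
    apply continuous_of_dominated (bound := fun x => ‖h x‖)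
    · intro t; exact (ann_memLp_inv hh.1 t).1
    · intro t
      refine ae_of_all _ fun x => ?_
      rw [norm_mul]
      exact mul_le_of_le_one_left (norm_nonneg _) (norm_inv_le x t)
    · exact hint.norm
    · refine ae_of_all _ fun x => ?_
      exact ((by fun_prop : Continuous (fun t : ℝ => (x:ℂ) - (t + Complex.I))).inv₀
        (fun t => sub_ne x t)).mul continuous_const
  have hG0 : 0 < ‖G 0‖ := norm_pos_iff.mpr hne
  have hev : ∀ᶠ t in nhds (0:ℝ), ‖G 0‖ / 2 < ‖G t‖ :=
    hG.norm.continuousAt.eventually (lt_mem_nhds (by linarith))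
  obtain ⟨r, hr, hb⟩ := Metric.eventually_nhds_iff.mp hev
  set ε := ‖G 0‖ / 2 with hε
  have hε0 : 0 < ε := by positivity
  set H := ∫ x, ‖h x‖ ^ 2 ∂ν with hH
  have hH0 : 0 ≤ H := integral_nonneg fun x => by positivity
  refine ⟨(H + 1) / ε ^ 2, r / 2, by positivity, by positivity, fun p t ht => ?_⟩
  obtain ⟨q, hq1, hq2⟩ := flip_aux _ p rfl
  have hGt : ε < ‖G t‖ := hb (by simp; linarith)
  have hev := ann_eval hm hh t q
  have hqL := poly_memLp hm q
  have hcs : ‖∫ x : ℝ, q.eval (x:ℂ) * (((x:ℂ) - (t + Complex.I))⁻¹ * h x) ∂ν‖ ^ 2 ≤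
      (∫ x : ℝ, ‖q.eval (x:ℂ)‖ ^ 2 ∂ν) * H := by
    have h1 : ‖∫ x : ℝ, q.eval (x:ℂ) * (((x:ℂ) - (t + Complex.I))⁻¹ * h x) ∂ν‖ ≤
        ∫ x : ℝ, ‖q.eval (x:ℂ)‖ * ‖h x‖ ∂ν := by
      apply norm_integral_le_of_norm_le (MemLp.integrable_mul hqL.norm hh.1.norm)
      refine ae_of_all _ fun x => ?_
      rw [norm_mul, norm_mul]
      apply mul_le_mul_of_nonneg_left _ (norm_nonneg _)
      exact mul_le_of_le_one_left (norm_nonneg _) (norm_inv_le x t)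
    have h2 := integral_mul_norm_le_Lp_mul_Lq (μ := ν) (f := fun x : ℝ => q.eval (x:ℂ)) (g := h)
      Real.HolderConjugate.two_two (by simpa using hqL) (by simpa using hh.1)
    have h3 := h1.trans h2
    have h4 : 0 ≤ ∫ x : ℝ, ‖q.eval (x:ℂ)‖ ^ 2 ∂ν := integral_nonneg fun x => by positivity
    simp only [Real.rpow_two, ← Real.sqrt_eq_rpow] at h3
    calc _ ≤ (Real.sqrt (∫ x : ℝ, ‖q.eval (x:ℂ)‖ ^ 2 ∂ν) * Real.sqrt H) ^ 2 :=
          pow_le_pow_left₀ (norm_nonneg _) h3 2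
      _ = _ := by rw [mul_pow, Real.sq_sqrt h4, Real.sq_sqrt hH0]
  rw [hev, norm_mul, mul_pow] at hcs
  have hqp : ∫ x : ℝ, ‖q.eval (x:ℂ)‖ ^ 2 ∂ν = ∫ x : ℝ, ‖p.eval (x:ℂ)‖ ^ 2 ∂ν := by
    simp only [hq1]
  rw [hqp] at hcs
  set I := ∫ x : ℝ, ‖p.eval (x:ℂ)‖ ^ 2 ∂ν
  have hI : 0 ≤ I := integral_nonneg fun x => by positivity
  have h5 : ‖p.eval (t:ℂ)‖ ^ 2 * ε ^ 2 ≤ I * H := by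
    refine le_trans ?_ hcs
    apply mul_le_mul _ _ (by positivity) (by positivity)
    · exact pow_le_pow_left₀ (norm_nonneg _) (hq2 t) 2
    · exact pow_le_pow_left₀ hε0.le hGt.le 2
  rw [div_mul_eq_mul_div, le_div_iff₀ (by positivity)]
  nlinarith

lemma wt_eq (m : ℕ) (p : ℂ[X]) (x : ℝ) :
    (1 + x ^ 2) ^ m * ‖p.eval (x:ℂ)‖ ^ 2 = ‖((X + C Complex.I) ^ m * p).eval (x:ℂ)‖ ^ 2 := by
  have h : ‖(x:ℂ) + Complex.I‖ ^ 2 = 1 + x ^ 2 := by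
    rw [← Complex.normSq_eq_norm_sq, Complex.normSq_apply]; simp; ring
  simp only [eval_mul, eval_pow, eval_add, eval_X, eval_C, norm_mul, norm_pow, mul_pow]
  rw [← h, pow_right_comm]

lemma wt_int {μ : Measure ℝ} (hm : HasAllMoments μ) (m : ℕ) (p : ℂ[X]) :
    Integrable (fun x : ℝ => (1 + x ^ 2) ^ m * ‖p.eval (x:ℂ)‖ ^ 2) μ := by
  simp only [wt_eq]
  exact (memLp_two_iff_integrable_sq_norm (poly_cont _).aestronglyMeasurable).mp (poly_memLp hm _)

lemma down_step {μ : Measure ℝ} (hm : HasAllMoments μ) (hneg : ∀ᵐ x ∂μ, 0 ≤ x)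
    (hmass : μ {0} = 0) (h0 : (0:ℝ) ∈ mSupp μ) (m : ℕ)
    (h : ∃ c ρ : ℝ, 0 < c ∧ 0 < ρ ∧ ∀ p : ℂ[X], ∀ t : ℝ, 0 ≤ t → t ≤ ρ →
      ‖p.eval (t:ℂ)‖ ^ 2 ≤ c * ∫ x : ℝ, (1 + x ^ 2) ^ (m + 1) * ‖p.eval (x:ℂ)‖ ^ 2 ∂μ) :
    ∃ c ρ : ℝ, 0 < c ∧ 0 < ρ ∧ ∀ p : ℂ[X], ∀ t : ℝ, 0 ≤ t → t ≤ ρ →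
      ‖p.eval (t:ℂ)‖ ^ 2 ≤ c * ∫ x : ℝ, (1 + x ^ 2) ^ m * ‖p.eval (x:ℂ)‖ ^ 2 ∂μ := by
  have := finite_of_moments hm
  obtain ⟨c, ρ, hc, hρ, hb⟩ := h
  set Wm : ℝ := (1 + ρ ^ 2) ^ (m + 1) with hWm
  have hWm0 : 0 < Wm := by positivity
  -- choose δ
  obtain ⟨δ, hδ0, hδρ, hδ⟩ : ∃ δ : ℝ, 0 < δ ∧ δ ≤ ρ ∧
      c * (Wm * μ.real (Set.Icc (-δ) δ)) ≤ 1 / 2 := by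
    have h1 := tendsto_measure_Icc_nhdsWithin_right' μ (0:ℝ)
    rw [hmass] at h1
    have hpos : (0:ENNReal) < ENNReal.ofReal (1 / (2 * c * Wm)) := by
      rw [ENNReal.ofReal_pos]; positivity
    have h2 := h1.eventually (gt_mem_nhds hpos)
    have h3 : ∀ᶠ δ in nhdsWithin (0:ℝ) (Set.Ioi 0), δ ∈ Set.Ioc 0 ρ := Ioc_mem_nhdsGT hρ
    obtain ⟨δ, h4, h5⟩ := (h2.and h3).exists
    refine ⟨δ, h5.1, h5.2, ?_⟩
    simp only [zero_sub, zero_add] at h4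
    have h6 : μ.real (Set.Icc (-δ) δ) ≤ 1 / (2 * c * Wm) := by
      rw [Measure.real]
      exact ENNReal.toReal_le_of_le_ofReal (by positivity) h4.le
    calc c * (Wm * μ.real (Set.Icc (-δ) δ)) ≤ c * (Wm * (1 / (2 * c * Wm))) := by gcongr
      _ = 1 / 2 := by field_simp
  set B : Set ℝ := Set.Icc (-δ) δ with hB
  have hBm : MeasurableSet B := measurableSet_Icc
  have absorb : ∀ q : ℂ[X], ∀ t : ℝ, 0 ≤ t → t ≤ ρ → ‖q.eval (t:ℂ)‖ ^ 2 ≤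
      2 * c * ∫ x in Bᶜ, (1 + x ^ 2) ^ (m + 1) * ‖q.eval (x:ℂ)‖ ^ 2 ∂μ := by
    intro q
    obtain ⟨t₀, ht₀, hmax⟩ := isCompact_Icc.exists_isMaxOn (Set.nonempty_Icc.mpr hρ.le)
      ((poly_cont q).norm.pow 2).continuousOn
    have hmax' : ∀ t, 0 ≤ t → t ≤ ρ → ‖q.eval (t:ℂ)‖ ^ 2 ≤ ‖q.eval (t₀:ℂ)‖ ^ 2 :=
      fun t h1 h2 => hmax ⟨h1, h2⟩
    set S := ‖q.eval (t₀:ℂ)‖ ^ 2 with hS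
    have hS0 : 0 ≤ S := by positivity
    have h1 := hb q t₀ ht₀.1 ht₀.2
    have hqi := wt_int hm (m + 1) q
    rw [← integral_add_compl hBm hqi] at h1
    have h2 : ∫ x in B, (1 + x ^ 2) ^ (m + 1) * ‖q.eval (x:ℂ)‖ ^ 2 ∂μ ≤ Wm * S * μ.real B := by
      have : ∫ x in B, (1 + x ^ 2) ^ (m + 1) * ‖q.eval (x:ℂ)‖ ^ 2 ∂μ ≤ ∫ x in B, Wm * S ∂μ := by
        apply setIntegral_mono_on_ae hqi.integrableOn (integrable_const _).integrableOn hBm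
        filter_upwards [hneg] with x hx hxB
        have hxρ : x ≤ ρ := hxB.2.trans hδρ
        have h3 := hmax' x hx hxρ
        have h4 : (1 + x ^ 2) ^ (m + 1) ≤ Wm := by rw [hWm]; gcongr
        exact mul_le_mul h4 h3 (by positivity) hWm0.le
      refine this.trans (le_of_eq ?_)
      simp [mul_comm]
    intro t ht1 ht2
    refine (hmax' t ht1 ht2).trans ?_
    have h5 : c * (Wm * S * μ.real B) ≤ S / 2 := by nlinarith
    nlinarith [mul_le_mul_of_nonneg_left h2 hc.le]
  -- the set J
  set J : Set ℝ := Set.Icc 0 (δ / 2) with hJ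
  have hJ0 : μ J ≠ 0 := by
    intro hz
    apply h0 (Set.Icc (-(δ / 2)) (δ / 2)) (Icc_mem_nhds (by linarith) (by linarith))
    have : Set.Icc (-(δ / 2)) (δ / 2) ⊆ J ∪ {x | ¬ 0 ≤ x} := by
      intro x hx
      by_cases h : 0 ≤ x
      · exact Or.inl ⟨h, hx.2⟩
      · exact Or.inr h
    exact measure_mono_null this (measure_union_null hz hneg)
  have hJr : 0 < μ.real J := ENNReal.toReal_pos hJ0 (measure_ne_top _ _)
  set a := μ.real J with ha
  set M := ∫ x : ℝ, (1 + x ^ 2) ^ m ∂μ with hM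
  have hM0 : 0 ≤ M := integral_nonneg fun x => by positivity
  have hMi : Integrable (fun x : ℝ => (1 + x ^ 2) ^ m) μ := by
    simpa using wt_int hm m 1
  set K := 4 * (1 / δ ^ 2 + 1) with hK
  have hK0 : 0 < K := by positivity
  refine ⟨2 / a + 2 * ρ ^ 2 * (2 * c * (2 * K * (1 + M / a))), ρ, by positivity, hρ, ?_⟩
  intro p t ht0 htρ
  set N := ∫ x : ℝ, (1 + x ^ 2) ^ m * ‖p.eval (x:ℂ)‖ ^ 2 ∂μ with hN
  have hN0 : 0 ≤ N := integral_nonneg fun x => by positivity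
  have hpi := wt_int hm m p
  have hp0 : Integrable (fun x : ℝ => ‖p.eval (x:ℂ)‖ ^ 2) μ := by simpa using wt_int hm 0 p
  obtain ⟨y, hyJ, hy⟩ : ∃ y ∈ J, ‖p.eval (y:ℂ)‖ ^ 2 ≤ N / a := by
    obtain ⟨y, hyJ, hy⟩ := exists_le_setAverage hJ0 (measure_ne_top _ _)
      (hp0.integrableOn (s := J))
    refine ⟨y, hyJ, hy.trans ?_⟩
    rw [setAverage_eq, smul_eq_mul, div_eq_inv_mul]
    apply mul_le_mul_of_nonneg_left _ (by positivity)
    refine (setIntegral_le_integral hp0 (ae_of_all _ fun x => by positivity)).trans ?_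
    apply integral_mono hp0 hpi
    intro x
    have : (1:ℝ) ≤ (1 + x ^ 2) ^ m := one_le_pow₀ (by nlinarith [sq_nonneg x])
    exact le_mul_of_one_le_left (by positivity) this
  obtain ⟨q, hq⟩ := Polynomial.X_sub_C_dvd_sub_C_eval (p := p) (a := (y:ℂ))
  have hqe : ∀ x : ℝ, p.eval (x:ℂ) = p.eval (y:ℂ) + ((x:ℂ) - y) * q.eval (x:ℂ) := by
    intro x
    have := congrArg (fun r => Polynomial.eval (x:ℂ) r) hq
    simp at this
    linear_combination this
  have two : ∀ u v : ℂ, ‖u + v‖ ^ 2 ≤ 2 * ‖u‖ ^ 2 + 2 * ‖v‖ ^ 2 := by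
    intro u v
    have := norm_add_le u v
    nlinarith [norm_nonneg (u + v), norm_nonneg u, norm_nonneg v, sq_nonneg (‖u‖ - ‖v‖)]
  have hxy : ∀ x : ℝ, ‖(x:ℂ) - y‖ ^ 2 = (x - y) ^ 2 := by
    intro x
    rw [← Complex.ofReal_sub, Complex.norm_real, Real.norm_eq_abs, sq_abs]
  have hcompl : ∫ x in Bᶜ, (1 + x ^ 2) ^ (m + 1) * ‖q.eval (x:ℂ)‖ ^ 2 ∂μ ≤
      2 * K * (1 + M / a) * N := by
    have hI : Integrable (fun x : ℝ => 2 * K * ((1 + x ^ 2) ^ m * ‖p.eval (x:ℂ)‖ ^ 2) +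
        2 * K * ‖p.eval (y:ℂ)‖ ^ 2 * (1 + x ^ 2) ^ m) μ :=
      (hpi.const_mul _).add (hMi.const_mul _)
    calc _ ≤ ∫ x in Bᶜ, (2 * K * ((1 + x ^ 2) ^ m * ‖p.eval (x:ℂ)‖ ^ 2) +
        2 * K * ‖p.eval (y:ℂ)‖ ^ 2 * (1 + x ^ 2) ^ m) ∂μ := by
          apply setIntegral_mono_on_ae (wt_int hm (m+1) q).integrableOn hI.integrableOn hBm.compl
          filter_upwards [hneg] with x hx hxB
          have hxδ : δ < x := by
            by_contra hle
            push Not at hle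
            exact hxB ⟨by linarith, hle⟩
          have h1 : 1 + x ^ 2 ≤ K * (x - y) ^ 2 := by
            have h2 : x / 2 ≤ x - y := by have := hyJ.2; linarith
            have h3 : (x / 2) ^ 2 ≤ (x - y) ^ 2 := by gcongr
            have h4 : 1 ≤ x ^ 2 / δ ^ 2 := by
              rw [one_le_div (by positivity)]; gcongr
            calc 1 + x ^ 2 ≤ x ^ 2 / δ ^ 2 + x ^ 2 := by linarith
              _ = K * (x / 2) ^ 2 := by rw [hK]; ring
              _ ≤ _ := by gcongr
          have h5 : (x - y) ^ 2 * ‖q.eval (x:ℂ)‖ ^ 2 ≤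
              2 * ‖p.eval (x:ℂ)‖ ^ 2 + 2 * ‖p.eval (y:ℂ)‖ ^ 2 := by
            have h6 := two (p.eval (x:ℂ)) (-p.eval (y:ℂ))
            rw [norm_neg] at h6
            have h7 : p.eval (x:ℂ) + -p.eval (y:ℂ) = ((x:ℂ) - y) * q.eval (x:ℂ) := by
              rw [hqe x]; ring
            rw [h7, norm_mul, mul_pow, hxy] at h6
            exact h6
          calc (1 + x ^ 2) ^ (m + 1) * ‖q.eval (x:ℂ)‖ ^ 2
              = (1 + x ^ 2) ^ m * ((1 + x ^ 2) * ‖q.eval (x:ℂ)‖ ^ 2) := by ring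
            _ ≤ (1 + x ^ 2) ^ m * (K * (x - y) ^ 2 * ‖q.eval (x:ℂ)‖ ^ 2) := by gcongr
            _ = (1 + x ^ 2) ^ m * (K * ((x - y) ^ 2 * ‖q.eval (x:ℂ)‖ ^ 2)) := by ring
            _ ≤ (1 + x ^ 2) ^ m * (K * (2 * ‖p.eval (x:ℂ)‖ ^ 2 + 2 * ‖p.eval (y:ℂ)‖ ^ 2)) := by
                gcongr
            _ = _ := by ring
      _ ≤ ∫ x : ℝ, (2 * K * ((1 + x ^ 2) ^ m * ‖p.eval (x:ℂ)‖ ^ 2) +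
        2 * K * ‖p.eval (y:ℂ)‖ ^ 2 * (1 + x ^ 2) ^ m) ∂μ :=
          setIntegral_le_integral hI (ae_of_all _ fun x => by positivity)
      _ = 2 * K * N + 2 * K * ‖p.eval (y:ℂ)‖ ^ 2 * M := by
          rw [integral_add (hpi.const_mul _) (hMi.const_mul _), integral_const_mul,
            integral_const_mul]
      _ ≤ 2 * K * N + 2 * K * (N / a) * M := by gcongr
      _ = _ := by ring
  have hq1 := absorb q t ht0 htρ
  have h8 := two (p.eval (y:ℂ)) (((t:ℂ) - y) * q.eval (t:ℂ))
  rw [← hqe t, norm_mul, mul_pow, hxy] at h8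
  have h9 : (t - y) ^ 2 ≤ ρ ^ 2 := by
    have h1 := hyJ.1
    have h2 := hyJ.2
    apply sq_le_sq'
    · linarith
    · linarith
  calc _ ≤ _ := h8
    _ ≤ 2 * (N / a) + 2 * (ρ ^ 2 * (2 * c * (2 * K * (1 + M / a) * N))) := by
        gcongr
        exact hq1.trans (by gcongr)
    _ = _ := by ring

lemma down {μ : Measure ℝ} (hm : HasAllMoments μ) (hneg : ∀ᵐ x ∂μ, 0 ≤ x)
    (hmass : μ {0} = 0) (h0 : (0:ℝ) ∈ mSupp μ) (m : ℕ)
    (h : ∃ c ρ : ℝ, 0 < c ∧ 0 < ρ ∧ ∀ p : ℂ[X], ∀ t : ℝ, 0 ≤ t → t ≤ ρ →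
      ‖p.eval (t:ℂ)‖ ^ 2 ≤ c * ∫ x : ℝ, (1 + x ^ 2) ^ m * ‖p.eval (x:ℂ)‖ ^ 2 ∂μ) :
    ∃ c : ℝ, 0 < c ∧ ∀ p : ℂ[X],
      ‖p.eval 0‖ ^ 2 ≤ c * ∫ x : ℝ, ‖p.eval (x:ℂ)‖ ^ 2 ∂μ := by
  induction m with
  | zero =>
    obtain ⟨c, ρ, hc, hρ, hb⟩ := h
    refine ⟨c, hc, fun p => ?_⟩
    simpa using hb p 0 le_rfl hρ.le
  | succ m ih => exact ih (down_step hm hneg hmass h0 m h)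

lemma W_mono (x : ℝ) {a b : ℕ} (h : a ≤ b) : (1 + x ^ 2) ^ a ≤ (1 + x ^ 2) ^ b :=
  pow_le_pow_right₀ (by nlinarith [sq_nonneg x]) h

def PG : Submodule ℝ (ℝ → ℝ) where
  carrier := {f | Continuous f ∧ ∃ n : ℕ, ∃ K : ℝ, 0 ≤ K ∧ ∀ x, |f x| ≤ K * (1 + x ^ 2) ^ n}
  add_mem' := by
    rintro f g ⟨hf, n, K, hK, h⟩ ⟨hg, m, L, hL, h'⟩
    refine ⟨hf.add hg, n + m, K + L, by positivity, fun x => ?_⟩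
    calc |f x + g x| ≤ |f x| + |g x| := abs_add_le _ _
      _ ≤ K * (1 + x ^ 2) ^ n + L * (1 + x ^ 2) ^ m := add_le_add (h x) (h' x)
      _ ≤ K * (1 + x ^ 2) ^ (n + m) + L * (1 + x ^ 2) ^ (n + m) :=
          add_le_add (mul_le_mul_of_nonneg_left (W_mono x (by omega)) hK)
            (mul_le_mul_of_nonneg_left (W_mono x (by omega)) hL)
      _ = _ := by ring
  zero_mem' := ⟨continuous_const, 0, 0, le_rfl, by simp⟩
  smul_mem' := by
    rintro c f ⟨hf, n, K, hK, h⟩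
    refine ⟨hf.const_smul c, n, |c| * K, by positivity, fun x => ?_⟩
    simp only [Pi.smul_apply, smul_eq_mul, abs_mul, mul_assoc]
    exact mul_le_mul_of_nonneg_left (h x) (abs_nonneg _)

lemma abs_le_W (x : ℝ) : |x| ≤ 1 + x ^ 2 := by
  rw [← sq_abs]; nlinarith [sq_nonneg (|x| - 1), abs_nonneg x]

lemma abs_pow_mem (n : ℕ) : (fun x : ℝ => |x| ^ n) ∈ PG :=
  ⟨by fun_prop, n, 1, zero_le_one, fun x => by
    rw [abs_pow, abs_abs, one_mul]
    exact pow_le_pow_left₀ (abs_nonneg _) (abs_le_W x) n⟩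

lemma poly_mem (p : ℝ[X]) : (fun x : ℝ => p.eval x) ∈ PG := by
  induction p using Polynomial.induction_on' with
  | add p q hp hq =>
    simp only [eval_add]
    exact PG.add_mem hp hq
  | monomial n a =>
    refine ⟨Polynomial.continuous _, n, |a|, abs_nonneg _, fun x => ?_⟩
    simp only [eval_monomial, abs_mul, abs_pow]
    exact mul_le_mul_of_nonneg_left (pow_le_pow_left₀ (abs_nonneg _) (abs_le_W x) n) (abs_nonneg _)

lemma W_int {μ : Measure ℝ} (hm : HasAllMoments μ) (m : ℕ) :
    Integrable (fun x : ℝ => (1 + x ^ 2) ^ m) μ := by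
  simpa using wt_int hm m 1

lemma PG_int {μ : Measure ℝ} (hm : ∀ m : ℕ, Integrable (fun x : ℝ => (1 + x ^ 2) ^ m) μ)
    (f : PG) : Integrable (f : ℝ → ℝ) μ := by
  obtain ⟨f, hf, n, K, hK, h⟩ := f
  exact ((hm n).const_mul K).mono' hf.aestronglyMeasurable (ae_of_all _ h)

def PD : Submodule ℝ PG where
  carrier := {f | ∃ p : ℝ[X], ∀ x, (f : ℝ → ℝ) x = p.eval x}
  add_mem' := by
    rintro f g ⟨p, hp⟩ ⟨q, hq⟩
    exact ⟨p + q, fun x => by simp [hp, hq]⟩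
  zero_mem' := ⟨0, by simp⟩
  smul_mem' := by
    rintro c f ⟨p, hp⟩
    exact ⟨C c * p, fun x => by simp [hp]⟩

def PCone : PointedCone ℝ PG where
  carrier := {f | ∀ x, 0 ≤ (f : ℝ → ℝ) x}
  add_mem' := by
    intro f g hf hg x
    exact add_nonneg (hf x) (hg x)
  zero_mem' := fun x => le_rfl
  smul_mem' := by
    intro c f hf x
    exact mul_nonneg c.2 (hf x)

lemma exists_ext {μ : Measure ℝ} (hm : HasAllMoments μ) (c : ℝ)
    (hpos : ∀ p : ℝ[X], (∀ x, 0 ≤ p.eval x) → c * p.eval 0 ≤ ∫ x, p.eval x ∂μ) :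
    ∃ g : PG →ₗ[ℝ] ℝ, (∀ p : ℝ[X], g ⟨_, poly_mem p⟩ = ∫ x, p.eval x ∂μ - c * p.eval 0) ∧
      ∀ f : PG, (∀ x, 0 ≤ (f : ℝ → ℝ) x) → 0 ≤ g f := by
  let F : PG →ₗ.[ℝ] ℝ :=
    { domain := PD
      toFun :=
        { toFun := fun f => ∫ x, ((f : PG) : ℝ → ℝ) x ∂μ - c * ((f : PG) : ℝ → ℝ) 0
          map_add' := by
            intro f g
            have := integral_add (PG_int (W_int hm) f) (PG_int (W_int hm) g)
            simp only [Submodule.coe_add, Pi.add_apply]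
            rw [this]; ring
          map_smul' := by
            intro a f
            simp only [Submodule.coe_smul, Pi.smul_apply, smul_eq_mul, RingHom.id_apply]
            rw [integral_const_mul]; ring } }
  obtain ⟨g, h1, h2⟩ := riesz_extension PCone F (by
    rintro ⟨f, p, hp⟩ hf
    have hp0 : ∀ x, 0 ≤ p.eval x := fun x => by rw [← hp]; exact hf x
    have := hpos p hp0
    change 0 ≤ ∫ x, (f : ℝ → ℝ) x ∂μ - c * (f : ℝ → ℝ) 0
    simp only [hp]
    linarith) (by
    rintro ⟨f, hf, n, K, hK, h⟩
    refine ⟨⟨⟨_, poly_mem (C K * (1 + X ^ 2) ^ n)⟩, ⟨_, fun x => rfl⟩⟩, fun x => ?_⟩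
    have := neg_le_of_abs_le (h x)
    simp
    linarith)
  refine ⟨g, fun p => ?_, fun f hf => h2 f hf⟩
  exact h1 ⟨⟨_, poly_mem p⟩, ⟨p, fun x => rfl⟩⟩

def chi (N : ℕ) (x : ℝ) : ℝ := max 0 (min 1 (N + 1 - |x|))

lemma chi_cont (N : ℕ) : Continuous (chi N) := by unfold chi; fun_prop
lemma chi_nonneg (N : ℕ) (x : ℝ) : 0 ≤ chi N x := le_max_left _ _
lemma chi_le (N : ℕ) (x : ℝ) : chi N x ≤ 1 := max_le zero_le_one (min_le_left _ _)
lemma chi_one (N : ℕ) (x : ℝ) (h : |x| ≤ N) : chi N x = 1 := by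
  unfold chi
  rw [min_eq_left (by linarith), max_eq_right zero_le_one]
lemma chi_supp (N : ℕ) : HasCompactSupport (chi N) := by
  apply HasCompactSupport.intro (isCompact_Icc (a := -((N:ℝ) + 1)) (b := N + 1))
  intro x hx
  have : (N:ℝ) + 1 < |x| := by
    by_contra h
    push Not at h
    exact hx (abs_le.mp h)
  unfold chi
  apply max_eq_left
  exact (min_le_right _ _).trans (by linarith)

open CompactlySupported in
lemma cc_mem (f : C_c(ℝ, ℝ)) : (f : ℝ → ℝ) ∈ PG := by
  obtain ⟨K, hK⟩ := f.continuous.bounded_above_of_compact_support f.hasCompactSupport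
  refine ⟨f.continuous, 0, K, (norm_nonneg _).trans (hK 0), fun x => ?_⟩
  simpa using hK x

open CompactlySupported in
lemma exists_meas (g : PG →ₗ[ℝ] ℝ) (hg : ∀ f : PG, (∀ x, 0 ≤ (f : ℝ → ℝ) x) → 0 ≤ g f) :
    ∃ ν : Measure ℝ, ∀ f : PG, Integrable (f : ℝ → ℝ) ν ∧ ∫ x, (f : ℝ → ℝ) x ∂ν = g f := by
  let L : C_c(ℝ, ℝ) →ₗ[ℝ] ℝ :=
    { toFun := fun f => g ⟨f, cc_mem f⟩
      map_add' := fun f h => by rw [← map_add]; rfl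
      map_smul' := fun a f => by rw [RingHom.id_apply, ← map_smul]; rfl }
  let Λ : C_c(ℝ, ℝ) →ₚ[ℝ] ℝ := PositiveLinearMap.mk₀ L (fun f hf => hg _ (fun x => hf x))
  let ν := RealRMK.rieszMeasure Λ
  have hreg : ν.Regular := by infer_instance
  have hν : ∀ f : C_c(ℝ, ℝ), ∫ x, f x ∂ν = g ⟨f, cc_mem f⟩ := fun f =>
    RealRMK.integral_rieszMeasure Λ f
  have hmono : ∀ f h : PG, (∀ x, (f : ℝ → ℝ) x ≤ (h : ℝ → ℝ) x) → g f ≤ g h := by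
    intro f h hfh
    have := hg (h - f) (fun x => sub_nonneg.mpr (hfh x))
    rw [map_sub] at this
    linarith
  let cut : PG → ℕ → C_c(ℝ, ℝ) := fun f N =>
    { toFun := fun x => (f : ℝ → ℝ) x * chi N x
      continuous_toFun := f.2.1.mul (chi_cont N)
      hasCompactSupport' := (chi_supp N).mul_left }
  let WW : ℕ → PG := fun n => ⟨fun x => (1 + x ^ 2) ^ n, by fun_prop, n, 1, zero_le_one, fun x => by
    rw [one_mul, abs_of_nonneg (by positivity)]⟩
  have hWint : ∀ n : ℕ, Integrable (fun x : ℝ => (1 + x ^ 2) ^ n) ν := by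
    intro n
    have hcov : AECover ν atTop (fun N : ℕ => Set.Icc (-(N:ℝ)) N) :=
      aecover_Icc (tendsto_neg_atTop_atBot.comp tendsto_natCast_atTop_atTop)
        tendsto_natCast_atTop_atTop
    refine hcov.integrable_of_integral_norm_bounded (g (WW n)) (fun N => ?_)
      (Eventually.of_forall fun N => ?_)
    · exact Continuous.integrableOn_Icc (by fun_prop)
    · have hci : Integrable (cut (WW n) N) ν := (cut (WW n) N).integrable
      calc ∫ x in Set.Icc (-(N:ℝ)) N, ‖(1 + x ^ 2) ^ n‖ ∂ν
          = ∫ x in Set.Icc (-(N:ℝ)) N, cut (WW n) N x ∂ν := by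
            apply setIntegral_congr_fun measurableSet_Icc
            intro x hx
            change ‖(1 + x ^ 2) ^ n‖ = (1 + x ^ 2) ^ n * chi N x
            rw [chi_one N x (abs_le.mpr hx), mul_one, Real.norm_of_nonneg (by positivity)]
        _ ≤ ∫ x, cut (WW n) N x ∂ν := setIntegral_le_integral hci (ae_of_all _ fun x =>
            mul_nonneg (by positivity) (chi_nonneg N x))
        _ = g ⟨cut (WW n) N, cc_mem _⟩ := hν _
        _ ≤ g (WW n) := hmono _ _ (fun x =>
            mul_le_of_le_one_right (by positivity) (chi_le N x))
  refine ⟨ν, fun f => ⟨PG_int hWint f, ?_⟩⟩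
  have hfi := PG_int hWint f
  obtain ⟨n, K, hK, hb⟩ := f.2.2
  have t1 : Tendsto (fun N : ℕ => ∫ x, cut f N x ∂ν) atTop (nhds (∫ x, (f : ℝ → ℝ) x ∂ν)) := by
    apply tendsto_integral_of_dominated_convergence (fun x => ‖(f : ℝ → ℝ) x‖)
    · intro N; exact (cut f N).continuous.aestronglyMeasurable
    · exact hfi.norm
    · intro N
      refine ae_of_all _ fun x => ?_
      change ‖(f : ℝ → ℝ) x * chi N x‖ ≤ _
      rw [norm_mul, Real.norm_of_nonneg (chi_nonneg N x)]
      exact mul_le_of_le_one_right (norm_nonneg _) (chi_le N x)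
    · refine ae_of_all _ fun x => ?_
      apply tendsto_const_nhds.congr'
      obtain ⟨N₀, hN₀⟩ := exists_nat_ge |x|
      filter_upwards [eventually_ge_atTop N₀] with N hN
      change _ = (f : ℝ → ℝ) x * chi N x
      rw [chi_one N x (hN₀.trans (by exact_mod_cast hN)), mul_one]
  have t2 : Tendsto (fun N : ℕ => ∫ x, cut f N x ∂ν) atTop (nhds (g f)) := by
    rw [tendsto_iff_norm_sub_tendsto_zero]
    apply squeeze_zero' (Eventually.of_forall fun N => norm_nonneg _) _
      (tendsto_const_div_atTop_nhds_zero_nat (K * g (WW (n + 1))))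
    filter_upwards [eventually_gt_atTop 0] with N hN
    have hN' : (0:ℝ) < N := by exact_mod_cast hN
    rw [hν, ← map_sub, le_div_iff₀ hN', Real.norm_eq_abs, mul_comm, ← abs_of_pos hN', ← abs_mul,
      ← smul_eq_mul, ← map_smul, ← smul_eq_mul K, ← map_smul]
    have key : ∀ x : ℝ, |(N:ℝ) * ((f : ℝ → ℝ) x * chi N x - (f : ℝ → ℝ) x)| ≤
        K * (1 + x ^ 2) ^ (n + 1) := by
      intro x
      by_cases hx : |x| ≤ N
      · rw [chi_one N x hx]
        simp; positivity
      · push Not at hx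
        have h1 : (N:ℝ) ≤ 1 + x ^ 2 := hx.le.trans (abs_le_W x)
        have h2 : |chi N x - 1| ≤ 1 := by
          rw [abs_le]; constructor <;> linarith [chi_nonneg N x, chi_le N x]
        have h3 : (N:ℝ) * ((f : ℝ → ℝ) x * chi N x - (f : ℝ → ℝ) x) =
            N * ((f : ℝ → ℝ) x * (chi N x - 1)) := by ring
        rw [h3, abs_mul, abs_mul, abs_of_pos hN']
        calc (N:ℝ) * (|(f : ℝ → ℝ) x| * |chi N x - 1|)
            ≤ (1 + x ^ 2) * ((K * (1 + x ^ 2) ^ n) * 1) := by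
              gcongr
              exact hb x
          _ = _ := by ring
    rw [abs_le]
    constructor
    · rw [← map_neg]
      exact hmono _ _ fun x => (abs_le.mp (key x)).1
    · exact hmono _ _ fun x => (abs_le.mp (key x)).2
  exact tendsto_nhds_unique t1 t2

lemma not_det {μ : Measure ℝ} (hm : HasAllMoments μ) (hmass : μ {0} = 0)
    (hb : ∃ c : ℝ, 0 < c ∧ ∀ p : ℂ[X],
      ‖p.eval 0‖ ^ 2 ≤ c * ∫ x : ℝ, ‖p.eval (x:ℂ)‖ ^ 2 ∂μ) : ¬ IsDeterminate μ := by
  intro hdet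
  obtain ⟨c, hc, hb⟩ := hb
  obtain ⟨g, hg1, hg2⟩ := exists_ext hm c⁻¹ (by
    intro p hp
    obtain ⟨s, hs⟩ := sos_aux _ p le_rfl hp
    have h1 := hb s
    simp only [hs] at h1
    have h2 := hs 0
    rw [Complex.ofReal_zero] at h2
    rw [h2] at h1
    rw [inv_mul_le_iff₀ hc]
    exact h1)
  obtain ⟨ν, hν⟩ := exists_meas g hg2
  have hfin : HasAllMoments ν := fun n => (hν ⟨_, abs_pow_mem n⟩).1
  have hmass' : ν + ENNReal.ofReal c⁻¹ • Measure.dirac 0 = μ := by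
    have hdi : ∀ f : ℝ → ℝ, Continuous f →
        Integrable f (ENNReal.ofReal c⁻¹ • Measure.dirac (0:ℝ)) := fun f hf =>
      (integrable_dirac (by simp)).smul_measure ENNReal.ofReal_ne_top
    apply hdet
    · intro n
      exact (hfin n).add_measure (hdi _ (by fun_prop))
    · intro n
      have h1 := hν ⟨_, poly_mem (X ^ n)⟩
      have h2 := hg1 (X ^ n)
      rw [h2] at h1
      simp only [eval_pow, eval_X] at h1
      rw [integral_add_measure h1.1 (hdi _ (by fun_prop)), h1.2, integral_smul_measure,
        integral_dirac, ENNReal.toReal_ofReal (by positivity), smul_eq_mul]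
      ring
  rw [← hmass'] at hmass
  simp at hmass
  have := hmass.2
  linarith

theorem stmt3 (μ : Measure ℝ) (hmom : HasAllMoments μ) (hinf : (mSupp μ).Infinite)
    (hdet : IsDeterminate μ) (hsupp : mSupp μ ⊆ Set.Ici (0 : ℝ))
    (h0 : (0 : ℝ) ∈ mSupp μ) (hmass : μ {0} = 0) :
    ∀ k : ℕ, PolyDense (μ.withDensity fun x => ENNReal.ofReal (x ^ k)) := by
  
  intro k
  by_contra hd
  have hneg : ∀ᵐ x ∂μ, 0 ≤ x := by
    have h1 : μ (mSupp μ)ᶜ = 0 := by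
      apply measure_null_of_locally_null
      intro x hx
      simp only [mSupp, Set.mem_compl_iff, Set.mem_setOf_eq, not_forall] at hx
      obtain ⟨U, hU, h⟩ := hx
      exact ⟨U, mem_nhdsWithin_of_mem_nhds hU, not_not.mp h⟩
    have h2 : ∀ᵐ x ∂μ, x ∈ mSupp μ := by
      rw [ae_iff]; exact h1
    filter_upwards [h2] with x hx using hsupp hx
  set w : ℝ → ENNReal := fun x => ENNReal.ofReal (x ^ k) with hw
  have hwm : Measurable w := by fun_prop
  have hwt : ∀ᵐ x ∂μ, w x < ⊤ := ae_of_all _ fun x => ENNReal.ofReal_lt_top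
  have hmk : HasAllMoments (μ.withDensity w) := by
    intro n
    rw [integrable_withDensity_iff hwm hwt]
    refine (hmom (n + k)).congr ?_
    filter_upwards [hneg] with x hx
    rw [hw, ENNReal.toReal_ofReal (by positivity), pow_add, abs_of_nonneg hx]
  obtain ⟨c, ρ, hc, hρ, hb⟩ := real_bound hmk hd
  refine not_det hmom hmass (down hmom hneg hmass h0 k ⟨c, ρ, hc, hρ, fun p t ht1 ht2 => ?_⟩) hdet
  refine (hb p t (by rwa [abs_of_nonneg ht1])).trans ?_
  apply mul_le_mul_of_nonneg_left _ hc.le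
  rw [integral_withDensity_eq_integral_toReal_smul hwm hwt]
  apply integral_mono_of_nonneg _ (wt_int hmom k p)
  · filter_upwards [hneg] with x hx
    rw [hw, ENNReal.toReal_ofReal (by positivity), smul_eq_mul]
    have h1 := (le_abs_self x).trans (abs_le_W x)
    gcongr
  · refine ae_of_all _ fun x => ?_
    simp only [smul_eq_mul, Pi.zero_apply]
    positivity
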